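/- Let G = [[4,6],[6,4]] and M = [[21,8],[-8,-3]], both 2x2 integer matrices. Then M^T * G * M = G, and M has infinite order: M^n is not the identity matrix for every integer n >= 1. -/

import Mathlib

/-!
The eigenvalues of a matrix of finite order are roots of unity, hence have norm `1`, so its trace,
being their sum, has norm at most the size of the matrix. Since `M` has size `2` and trace `18`, it
has infinite order.
-/

open Matrix

lemma isOfFinOrder_of_mem_spectrum {K A : Type*} [Field K] [Ring A] [Algebra K A] {a : A}
    (ha : IsOfFinOrder a) {μ : K} (hμ : μ ∈ spectrum K a) : IsOfFinOrder μ := by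
  obtain ⟨k, hk, hak⟩ := ha.exists_pow_eq_one
  have : Nontrivial A := not_subsingleton_iff_nontrivial.mp fun _ ↦ by
    simp [spectrum.of_subsingleton] at hμ
  have hμk : μ ^ k ∈ spectrum K (1 : A) := hak ▸ spectrum.pow_mem_pow a k hμ
  rw [spectrum.one_eq, Set.mem_singleton_iff] at hμk
  exact isOfFinOrder_iff_pow_eq_one.mpr ⟨k, hk, hμk⟩

section Trace

variable {n K : Type*} [Fintype n] [DecidableEq n] [NormedField K]

lemma norm_trace_le_card_of_isOfFinOrder {A : Matrix n n K} (hA : IsOfFinOrder A)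
    (hsplits : A.charpoly.Splits) : ‖A.trace‖ ≤ Fintype.card n := by
  have norm_root : ∀ μ ∈ A.charpoly.roots, ‖μ‖ = 1 := fun μ hμ ↦
    (isOfFinOrder_of_mem_spectrum hA <|
      mem_spectrum_iff_isRoot_charpoly.mpr (Polynomial.isRoot_of_mem_roots hμ)).norm_eq_one
  calc ‖A.trace‖ = ‖A.charpoly.roots.sum‖ := by
        rw [trace_eq_sum_roots_charpoly_of_splits hsplits]
    _ ≤ (A.charpoly.roots.map (‖·‖)).sum := norm_multiset_sum_le _
    _ = A.charpoly.roots.card := by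
        rw [Multiset.map_congr rfl norm_root, Multiset.map_const', Multiset.sum_replicate,
          nsmul_one]
    _ = Fintype.card n := by
        rw [← hsplits.natDegree_eq_card_roots, charpoly_natDegree_eq_dim]

lemma norm_map_trace_le_card_of_isOfFinOrder {R : Type*} [CommRing R] [IsAlgClosed K]
    (f : R →+* K) {A : Matrix n n R} (hA : IsOfFinOrder A) :
    ‖f A.trace‖ ≤ Fintype.card n := by
  rw [AddMonoidHom.map_trace f A]
  exact norm_trace_le_card_of_isOfFinOrder (f.mapMatrix.toMonoidHom.isOfFinOrder hA)
    (IsAlgClosed.splits _)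

end Trace

/-- The matrix `M = [[21,8],[-8,-3]]` is an isometry of infinite order of the lattice with
Gram matrix `G = [[4,6],[6,4]]`. -/
theorem isometry_infinite_order_P3xP3 :
    let G : Matrix (Fin 2) (Fin 2) ℤ := !![4, 6; 6, 4]
    let M : Matrix (Fin 2) (Fin 2) ℤ := !![21, 8; -8, -3]
    Mᵀ * G * M = G ∧ ∀ n : ℕ, 1 ≤ n → M ^ n ≠ 1 := by
  intro G M
  refine ⟨by decide, fun n hn hMn ↦ ?_⟩
  have trace_M : M.trace = 18 := by decide
  have finite_order : IsOfFinOrder M := isOfFinOrder_iff_pow_eq_one.mpr ⟨n, hn, hMn⟩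
  have trace_le := norm_map_trace_le_card_of_isOfFinOrder (Int.castRingHom ℂ) finite_order
  norm_num [trace_M] at trace_le
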